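/- Let D be an open subset of the half-plane {(z,ρ) ∈ ℝ² : ρ > 0} and let E : D → ℂ be twice continuously differentiable with Re E > 0 on D. Define the 2×2 matrix-valued function G = (1/(E + Ē)) · [[2, i(E − Ē)], [i(E − Ē), 2EĒ]]. Then G(z,ρ) is invertible at every point of D, and E satisfies the Ernst equation (E + Ē)(E_zz + ρ⁻¹E_ρ + E_ρρ) = 2(E_z² + E_ρ²) on D if and only if G satisfies the matrix equation ∂_ρ(ρ G_ρ G⁻¹) + ∂_z(ρ G_z G⁻¹) = 0 on D. -/

import Mathlib

open Complex Matrix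

noncomputable section

/-- Entrywise partial derivative of a matrix-valued function with respect to
the first coordinate `z`. -/
def matPz (F : ℝ × ℝ → Matrix (Fin 2) (Fin 2) ℂ) (p : ℝ × ℝ) :
    Matrix (Fin 2) (Fin 2) ℂ :=
  Matrix.of fun i j => deriv (fun t : ℝ => F (t, p.2) i j) p.1

/-- Entrywise partial derivative of a matrix-valued function with respect to
the second coordinate `ρ`. -/
def matPr (F : ℝ × ℝ → Matrix (Fin 2) (Fin 2) ℂ) (p : ℝ × ℝ) :
    Matrix (Fin 2) (Fin 2) ℂ :=
  Matrix.of fun i j => deriv (fun t : ℝ => F (p.1, t) i j) p.2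

/-- Partial derivative of a complex-valued function with respect to `z`. -/
def pz (f : ℝ × ℝ → ℂ) (p : ℝ × ℝ) : ℂ := deriv (fun t : ℝ => f (t, p.2)) p.1

/-- Partial derivative of a complex-valued function with respect to `ρ`. -/
def pr (f : ℝ × ℝ → ℂ) (p : ℝ × ℝ) : ℂ := deriv (fun t : ℝ => f (p.1, t)) p.2

/-!
The conjugate `star E` plays the role of an independent function `F`. Writing `s = E + F`, the
logarithmic derivative of `G` along a curve is `G' G⁻¹ = 2 s⁻² (E' P(F) - F' P(-E))`, where `P(c)`
is the nilpotent matrix with kernel and range spanned by `(1, -I c)`. When this is differentiated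
once more, the cross terms in `E' F'` cancel, because `s (P'(F) + P'(-E)) = 2 (P(F) - P(-E))`.
Hence the matrix equation reads `N(E, F) P(F) - N(F, E) P(-E) = 0`, where `N(E, F)` is the
difference of the two sides of the Ernst equation. The lines `(1, -I F)` and `(1, I E)` are
distinct as `s ≠ 0`, so the equation splits into `N(E, F) = 0` and `N(F, E) = 0`; for `F = star E`
these are conjugate to each other.
-/

open Filter Topology

/-- The matrix `G` of the Ernst equation, with an independent variable `b` in place of the
conjugate of `a`. -/
def ernstMatrix (a b : ℂ) : Matrix (Fin 2) (Fin 2) ℂ :=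
  (a + b)⁻¹ • !![2, I * (a - b); I * (a - b), 2 * a * b]

/-- The nilpotent matrix `P(c)` with kernel and range spanned by `(1, -I c)`. The logarithmic
derivatives of `ernstMatrix a b` are combinations of `P(b)` and `P(-a)`. -/
def nilpotentGenerator (c : ℂ) : Matrix (Fin 2) (Fin 2) ℂ :=
  !![-c, I; I * c ^ 2, c]

/-- The derivative of `nilpotentGenerator` with respect to its parameter. -/
def nilpotentGeneratorDeriv (c : ℂ) : Matrix (Fin 2) (Fin 2) ℂ :=
  !![-1, 0; 2 * I * c, 1]

/-- The logarithmic derivative `G' G⁻¹` of `G = ernstMatrix a b` along a curve on which `a` and `b`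
have velocities `u` and `v`. -/
def ernstCurrent (a b u v : ℂ) : Matrix (Fin 2) (Fin 2) ℂ :=
  (2 / (a + b) ^ 2) • (u • nilpotentGenerator b - v • nilpotentGenerator (-a))

/-- The difference of the two sides of the Ernst equation for `E`, with an independent function
`F` in place of the conjugate of `E`. It is the coefficient `N(E, F)` in the matrix equation. -/
def ernstResidual (E F : ℝ × ℝ → ℂ) (p : ℝ × ℝ) : ℂ :=
  (E p + F p) * (pz (pz E) p + (p.2 : ℂ)⁻¹ * pr E p + pr (pr E) p)
    - 2 * ((pz E p) ^ 2 + (pr E p) ^ 2)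

section Algebra

variable {a b : ℂ}

theorem add_star_ne_zero {w : ℂ} (hw : w.re ≠ 0) : w + star w ≠ 0 := by
  rw [star_def, add_conj]
  exact ofReal_ne_zero.mpr (mul_ne_zero two_ne_zero hw)

theorem det_ernstMatrix (hab : a + b ≠ 0) : (ernstMatrix a b).det = 1 := by
  rw [ernstMatrix, det_smul, det_fin_two_of, Fintype.card_fin]
  field_simp
  linear_combination (-(a - b) ^ 2) * I_sq

theorem isUnit_ernstMatrix (hab : a + b ≠ 0) : IsUnit (ernstMatrix a b) := by
  rw [isUnit_iff_isUnit_det, det_ernstMatrix hab]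
  exact isUnit_one

theorem ernstCurrent_mul_ernstMatrix (hab : a + b ≠ 0) (u v : ℂ) :
    ernstCurrent a b u v * ernstMatrix a b = (2 / (a + b) ^ 2) •
      !![-(u + v), I * (u * b - a * v);
        I * (u * b - a * v), u * b ^ 2 + a ^ 2 * v] := by
  rw [ernstCurrent, ernstMatrix, smul_mul_smul_comm, ← smul_smul]
  congr 1
  rw [inv_smul_eq_iff₀ hab]
  ext i j
  fin_cases i <;> fin_cases j <;>
    simp only [nilpotentGenerator, Matrix.mul_apply, Fin.sum_univ_two, Matrix.sub_apply,
      Matrix.smul_apply, smul_eq_mul, of_apply, cons_val', cons_val_zero, cons_val_one,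
      cons_val_fin_one, Fin.zero_eta, Fin.mk_one]
  · linear_combination (u - v) * (a - b) * I_sq
  · ring
  · ring
  · linear_combination (u * b ^ 2 - v * a ^ 2) * (a - b) * I_sq

theorem add_smul_nilpotentGeneratorDeriv_add (a b : ℂ) :
    (a + b) • (nilpotentGeneratorDeriv b + nilpotentGeneratorDeriv (-a)) =
      (2 : ℂ) • (nilpotentGenerator b - nilpotentGenerator (-a)) := by
  ext i j
  fin_cases i <;> fin_cases j <;>
    simp only [nilpotentGenerator, nilpotentGeneratorDeriv, Matrix.add_apply, Matrix.sub_apply,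
      Matrix.smul_apply, smul_eq_mul, of_apply, cons_val', cons_val_zero, cons_val_one,
      cons_val_fin_one, Fin.zero_eta, Fin.mk_one] <;>
    ring

theorem smul_nilpotentGenerator_sub_eq_zero_iff (hab : a + b ≠ 0) {x y : ℂ} :
    x • nilpotentGenerator b - y • nilpotentGenerator (-a) = 0 ↔ x = 0 ∧ y = 0 := by
  refine ⟨fun h => ?_, by rintro ⟨rfl, rfl⟩; simp only [zero_smul, sub_zero]⟩
  have h₀₀ : x * -b - y * - -a = 0 := congrFun₂ h 0 0
  have h₀₁ : x * I - y * I = 0 := congrFun₂ h 0 1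
  have hxy : x = y := mul_right_cancel₀ I_ne_zero (sub_eq_zero.mp h₀₁)
  have hy : (a + b) * y = 0 := by linear_combination -h₀₀ - b * hxy
  have hy₀ : y = 0 := (mul_eq_zero.mp hy).resolve_left hab
  exact ⟨hxy.trans hy₀, hy₀⟩

end Algebra

theorem differentiableAt_deriv_of_contDiffAt_two {𝕜 V : Type*} [NontriviallyNormedField 𝕜]
    [NormedAddCommGroup V] [NormedSpace 𝕜 V] {f : 𝕜 → V} {t : 𝕜} (hf : ContDiffAt 𝕜 2 f t) :
    DifferentiableAt 𝕜 (deriv f) t :=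
  (hf.derivWithin (m := 1) (by norm_num)).differentiableAt one_ne_zero

section EntrywiseDeriv

variable {𝕜 V m n : Type*} [NontriviallyNormedField 𝕜] [NormedAddCommGroup V] [NormedSpace 𝕜 V]
  {M N : 𝕜 → Matrix m n V} {M' : Matrix m n V} {t : 𝕜}

/-- The derivative of a curve of matrices, taken entry by entry. Both `matPz` and `matPr` are by
definition entrywise derivatives along coordinate lines. -/
def entrywiseDeriv (M : 𝕜 → Matrix m n V) (t : 𝕜) : Matrix m n V :=
  Matrix.of fun i j => deriv (fun τ => M τ i j) t

theorem entrywiseDeriv_congr (h : M =ᶠ[𝓝 t] N) : entrywiseDeriv M t = entrywiseDeriv N t :=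
  Matrix.ext fun i j => (h.fun_comp (· i j)).deriv_eq

-- The product rule needs a norm on matrices; the sup norm makes derivatives entrywise.
attribute [local instance] Matrix.normedAddCommGroup Matrix.normedSpace

theorem hasDerivAt_matrix_iff [Finite m] [Finite n] :
    HasDerivAt M M' t ↔ ∀ i j, HasDerivAt (fun τ => M τ i j) (M' i j) t := by
  have := Fintype.ofFinite m
  have := Fintype.ofFinite n
  exact hasDerivAt_pi.trans (forall_congr' fun _ => hasDerivAt_pi)

theorem entrywiseDeriv_eq_of_hasDerivAt [Finite m] [Finite n] (hM : HasDerivAt M M' t) :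
    entrywiseDeriv M t = M' :=
  Matrix.ext fun i j => (hasDerivAt_matrix_iff.mp hM i j).deriv

theorem hasDerivAt_matrix_fin_two {f g h k : 𝕜 → V} {f' g' h' k' : V}
    (hf : HasDerivAt f f' t) (hg : HasDerivAt g g' t) (hh : HasDerivAt h h' t)
    (hk : HasDerivAt k k' t) :
    HasDerivAt (fun τ => !![f τ, g τ; h τ, k τ]) !![f', g'; h', k'] t := by
  refine hasDerivAt_matrix_iff.mpr fun i j => ?_
  fin_cases i <;> fin_cases j
  exacts [hf, hg, hh, hk]

end EntrywiseDeriv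

section Curves

attribute [local instance] Matrix.normedAddCommGroup Matrix.normedSpace

variable {a b r u v : ℝ → ℂ} {a' b' r' u' v' : ℂ} {t : ℝ}

theorem hasDerivAt_nilpotentGenerator (hb : HasDerivAt b b' t) :
    HasDerivAt (fun τ => nilpotentGenerator (b τ)) (b' • nilpotentGeneratorDeriv (b t)) t := by
  refine (hasDerivAt_matrix_fin_two hb.neg (hasDerivAt_const t I)
    ((hb.pow 2).const_mul I) hb).congr_deriv ?_
  simp only [nilpotentGeneratorDeriv, smul_of, smul_cons, smul_empty, smul_eq_mul]
  push_cast
  ring_nf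

theorem hasDerivAt_ernstMatrix (ha : HasDerivAt a a' t) (hb : HasDerivAt b b' t)
    (hab : a t + b t ≠ 0) :
    HasDerivAt (fun τ => ernstMatrix (a τ) (b τ))
      (ernstCurrent (a t) (b t) a' b' * ernstMatrix (a t) (b t)) t := by
  have hoff := (ha.sub hb).const_mul I
  have hentries := hasDerivAt_matrix_fin_two (hasDerivAt_const t (2 : ℂ)) hoff hoff
    ((ha.const_mul 2).mul hb)
  refine (((ha.add hb).inv hab).smul hentries).congr_deriv ?_
  rw [ernstCurrent_mul_ernstMatrix hab]
  ext i j
  fin_cases i <;> fin_cases j <;>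
    simp only [Pi.inv_apply, Pi.add_apply, Pi.sub_apply, Pi.mul_apply, Matrix.add_apply,
      Matrix.smul_apply, smul_eq_mul, of_apply, cons_val', cons_val_zero, cons_val_one,
      cons_val_fin_one, Fin.zero_eta, Fin.mk_one] <;>
    field_simp <;>
    ring

theorem entrywiseDeriv_mul_inv_ernstMatrix (ha : HasDerivAt a a' t) (hb : HasDerivAt b b' t)
    (hab : a t + b t ≠ 0) :
    entrywiseDeriv (fun τ => ernstMatrix (a τ) (b τ)) t * (ernstMatrix (a t) (b t))⁻¹ =
      ernstCurrent (a t) (b t) a' b' := by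
  rw [entrywiseDeriv_eq_of_hasDerivAt (hasDerivAt_ernstMatrix ha hb hab),
    mul_nonsing_inv_cancel_right _ _ ((isUnit_iff_isUnit_det _).mp (isUnit_ernstMatrix hab))]

theorem hasDerivAt_smul_ernstCurrent (hr : HasDerivAt r r' t) (ha : HasDerivAt a (u t) t)
    (hb : HasDerivAt b (v t) t) (hu : HasDerivAt u u' t) (hv : HasDerivAt v v' t)
    (hab : a t + b t ≠ 0) :
    HasDerivAt (fun τ => r τ • ernstCurrent (a τ) (b τ) (u τ) (v τ))
      ((2 / (a t + b t) ^ 3) •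
        (((a t + b t) * (r' * u t + r t * u') - 2 * r t * u t ^ 2) • nilpotentGenerator (b t) -
          ((a t + b t) * (r' * v t + r t * v') - 2 * r t * v t ^ 2) •
            nilpotentGenerator (-a t))) t := by
  have hs : HasDerivAt (fun τ => 2 / (a τ + b τ) ^ 2)
      (-4 * (u t + v t) / (a t + b t) ^ 3) t := by
    refine ((hasDerivAt_const t (2 : ℂ)).div ((ha.add hb).pow 2) (pow_ne_zero 2 hab)).congr_deriv ?_
    simp only [Pi.pow_apply, Pi.add_apply]
    field_simp
    ring
  have hP := (hu.smul (hasDerivAt_nilpotentGenerator hb)).sub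
    (hv.smul (hasDerivAt_nilpotentGenerator ha.neg))
  refine (hr.smul (hs.smul hP)).congr_deriv ?_
  have hcross := add_smul_nilpotentGeneratorDeriv_add (a t) (b t)
  dsimp only [Pi.sub_apply, Pi.smul_apply', Pi.neg_apply]
  linear_combination (norm := skip) (2 * r t * u t * v t / (a t + b t) ^ 3) • hcross
  match_scalars <;> field_simp <;> ring

theorem entrywiseDeriv_smul_logDeriv_ernstMatrix {M : ℝ → Matrix (Fin 2) (Fin 2) ℂ}
    (hM : M =ᶠ[𝓝 t] fun τ => ernstMatrix (a τ) (b τ)) (hr : HasDerivAt r r' t)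
    (ha : ContDiffAt ℝ 2 a t) (hb : ContDiffAt ℝ 2 b t) (hab : a t + b t ≠ 0) :
    entrywiseDeriv (fun τ => r τ • (entrywiseDeriv M τ * (M τ)⁻¹)) t =
      (2 / (a t + b t) ^ 3) •
        (((a t + b t) * (r' * deriv a t + r t * deriv (deriv a) t) - 2 * r t * deriv a t ^ 2) •
            nilpotentGenerator (b t) -
          ((a t + b t) * (r' * deriv b t + r t * deriv (deriv b) t) - 2 * r t * deriv b t ^ 2) •
            nilpotentGenerator (-a t)) := by
  have hcurrent : (fun τ => r τ • (entrywiseDeriv M τ * (M τ)⁻¹)) =ᶠ[𝓝 t]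
      fun τ => r τ • ernstCurrent (a τ) (b τ) (deriv a τ) (deriv b τ) := by
    filter_upwards [hM.eventuallyEq_nhds, hM, ha.eventually (by simp), hb.eventually (by simp),
      (ha.continuousAt.add hb.continuousAt).eventually_ne hab] with τ hMτ hMτ' haτ hbτ habτ
    rw [entrywiseDeriv_congr hMτ, hMτ', entrywiseDeriv_mul_inv_ernstMatrix
      (haτ.differentiableAt two_ne_zero).hasDerivAt (hbτ.differentiableAt two_ne_zero).hasDerivAt
      habτ]
  rw [entrywiseDeriv_congr hcurrent]
  exact entrywiseDeriv_eq_of_hasDerivAt <| hasDerivAt_smul_ernstCurrent hr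
    (ha.differentiableAt two_ne_zero).hasDerivAt (hb.differentiableAt two_ne_zero).hasDerivAt
    (differentiableAt_deriv_of_contDiffAt_two ha).hasDerivAt
    (differentiableAt_deriv_of_contDiffAt_two hb).hasDerivAt hab

end Curves

section Plane

variable {E F : ℝ × ℝ → ℂ} {p : ℝ × ℝ} {G : ℝ × ℝ → Matrix (Fin 2) (Fin 2) ℂ}

theorem matPz_smul_matPz_mul_inv (hE : ContDiffAt ℝ 2 E p) (hF : ContDiffAt ℝ 2 F p)
    (hEF : E p + F p ≠ 0) (hG : G =ᶠ[𝓝 p] fun q => ernstMatrix (E q) (F q)) :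
    matPz (fun q => (q.2 : ℂ) • (matPz G q * (G q)⁻¹)) p =
      (2 / (E p + F p) ^ 3) •
        (((E p + F p) * (p.2 * pz (pz E) p) - 2 * p.2 * pz E p ^ 2) • nilpotentGenerator (F p) -
          ((E p + F p) * (p.2 * pz (pz F) p) - 2 * p.2 * pz F p ^ 2) •
            nilpotentGenerator (-E p)) := by
  have hline : ContDiffAt ℝ 2 (fun t : ℝ => (t, p.2)) p.1 := by fun_prop
  have h := entrywiseDeriv_smul_logDeriv_ernstMatrix (M := fun t => G (t, p.2))
    (hline.continuousAt.eventually hG) (hasDerivAt_const p.1 (p.2 : ℂ))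
    (hE.comp p.1 hline) (hF.comp p.1 hline) hEF
  simpa only [zero_mul, zero_add] using! h

theorem matPr_smul_matPr_mul_inv (hE : ContDiffAt ℝ 2 E p) (hF : ContDiffAt ℝ 2 F p)
    (hEF : E p + F p ≠ 0) (hG : G =ᶠ[𝓝 p] fun q => ernstMatrix (E q) (F q)) :
    matPr (fun q => (q.2 : ℂ) • (matPr G q * (G q)⁻¹)) p =
      (2 / (E p + F p) ^ 3) •
        (((E p + F p) * (pr E p + p.2 * pr (pr E) p) - 2 * p.2 * pr E p ^ 2) •
            nilpotentGenerator (F p) -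
          ((E p + F p) * (pr F p + p.2 * pr (pr F) p) - 2 * p.2 * pr F p ^ 2) •
            nilpotentGenerator (-E p)) := by
  have hline : ContDiffAt ℝ 2 (fun t : ℝ => (p.1, t)) p.2 := by fun_prop
  have h := entrywiseDeriv_smul_logDeriv_ernstMatrix (M := fun t => G (p.1, t))
    (hline.continuousAt.eventually hG) (hasDerivAt_id p.2).ofReal_comp
    (hE.comp p.2 hline) (hF.comp p.2 hline) hEF
  simpa only [ofReal_one, one_mul] using! h

theorem divergence_eq_smul_nilpotentGenerator_sub (hE : ContDiffAt ℝ 2 E p)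
    (hF : ContDiffAt ℝ 2 F p) (hEF : E p + F p ≠ 0) (hρ : p.2 ≠ 0)
    (hG : G =ᶠ[𝓝 p] fun q => ernstMatrix (E q) (F q)) :
    matPr (fun q => (q.2 : ℂ) • (matPr G q * (G q)⁻¹)) p +
        matPz (fun q => (q.2 : ℂ) • (matPz G q * (G q)⁻¹)) p =
      (2 * p.2 / (E p + F p) ^ 3) •
        (ernstResidual E F p • nilpotentGenerator (F p) -
          ernstResidual F E p • nilpotentGenerator (-E p)) := by
  rw [matPr_smul_matPr_mul_inv hE hF hEF hG, matPz_smul_matPz_mul_inv hE hF hEF hG]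
  have hρ' : (p.2 : ℂ) ≠ 0 := ofReal_ne_zero.mpr hρ
  simp only [ernstResidual]
  match_scalars <;> field_simp <;> ring

theorem pz_star (f : ℝ × ℝ → ℂ) : pz (star f) = star (pz f) :=
  funext fun _ => deriv.star

theorem pr_star (f : ℝ × ℝ → ℂ) : pr (star f) = star (pr f) :=
  funext fun _ => deriv.star

theorem ernstResidual_star (E F : ℝ × ℝ → ℂ) (p : ℝ × ℝ) :
    ernstResidual (star E) (star F) p = star (ernstResidual E F p) := by
  simp only [ernstResidual, pz_star, pr_star, Pi.star_apply, star_sub, star_mul', star_add,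
    star_inv₀, star_pow, star_ofNat, star_def, conj_ofReal]

theorem ernstResidual_star_eq_zero_and_iff :
    (ernstResidual E (star E) p = 0 ∧ ernstResidual (star E) E p = 0) ↔
      (E p + star (E p)) * (pz (pz E) p + (p.2 : ℂ)⁻¹ * pr E p + pr (pr E) p)
        = 2 * ((pz E p) ^ 2 + (pr E p) ^ 2) := by
  have hconj : ernstResidual (star E) E p = star (ernstResidual E (star E) p) := by
    rw [← ernstResidual_star, star_star]
  rw [hconj, star_eq_zero, and_self]
  exact sub_eq_zero

end Plane

theorem ernst_iff_matrix_form_general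
    (D : Set (ℝ × ℝ)) (hD : IsOpen D) (hρ : ∀ p ∈ D, p.2 ≠ 0)
    (E F : ℝ × ℝ → ℂ) (hE : ContDiffOn ℝ 2 E D) (hF : ContDiffOn ℝ 2 F D)
    (hEF : ∀ p ∈ D, E p + F p ≠ 0)
    (G : ℝ × ℝ → Matrix (Fin 2) (Fin 2) ℂ) (hG : ∀ p ∈ D, G p = ernstMatrix (E p) (F p)) :
    (∀ p ∈ D, IsUnit (G p)) ∧
    ((∀ p ∈ D, ernstResidual E F p = 0 ∧ ernstResidual F E p = 0) ↔
      (∀ p ∈ D,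
        matPr (fun q => (q.2 : ℂ) • (matPr G q * (G q)⁻¹)) p +
          matPz (fun q => (q.2 : ℂ) • (matPz G q * (G q)⁻¹)) p = 0)) := by
  refine ⟨fun p hp => hG p hp ▸ isUnit_ernstMatrix (hEF p hp), forall₂_congr fun p hp => ?_⟩
  have hDp : D ∈ 𝓝 p := hD.mem_nhds hp
  have hfactor : 2 * (p.2 : ℂ) / (E p + F p) ^ 3 ≠ 0 :=
    div_ne_zero (mul_ne_zero two_ne_zero (ofReal_ne_zero.mpr (hρ p hp)))
      (pow_ne_zero 3 (hEF p hp))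
  rw [divergence_eq_smul_nilpotentGenerator_sub (hE.contDiffAt hDp) (hF.contDiffAt hDp)
      (hEF p hp) (hρ p hp) (eventually_of_mem hDp hG),
    smul_eq_zero_iff_right hfactor, smul_nilpotentGenerator_sub_eq_zero_iff (hEF p hp)]

theorem ernst_iff_matrix_form
    (D : Set (ℝ × ℝ)) (hD : IsOpen D) (hDhalf : ∀ p ∈ D, 0 < p.2)
    (E : ℝ × ℝ → ℂ) (hE : ContDiffOn ℝ 2 E D)
    (hRe : ∀ p ∈ D, 0 < (E p).re)
    (G : ℝ × ℝ → Matrix (Fin 2) (Fin 2) ℂ)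
    (hG : ∀ p ∈ D, G p = (E p + star (E p))⁻¹ •
      !![2, Complex.I * (E p - star (E p));
          Complex.I * (E p - star (E p)), 2 * E p * star (E p)]) :
    (∀ p ∈ D, IsUnit (G p)) ∧
    ((∀ p ∈ D,
        (E p + star (E p)) *
          (pz (pz E) p + (p.2 : ℂ)⁻¹ * pr E p + pr (pr E) p)
          = 2 * ((pz E p) ^ 2 + (pr E p) ^ 2)) ↔
      (∀ p ∈ D,
        matPr (fun q => (q.2 : ℂ) • (matPr G q * (G q)⁻¹)) p +
          matPz (fun q => (q.2 : ℂ) • (matPz G q * (G q)⁻¹)) p = 0)) := by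
  simpa only [ernstResidual_star_eq_zero_and_iff] using
    ernst_iff_matrix_form_general D hD (fun p hp => (hDhalf p hp).ne') E (star E) hE
      (conjCLE.contDiff.comp_contDiffOn hE) (fun p hp => add_star_ne_zero (hRe p hp).ne') G hG
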